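/- Let n ≥ 2 be an integer and let Λ ⊂ ℝ² be a closed set that is 2-periodic with respect to the second variable. Let f_1, …, f_n ∈ L¹(ℝ) satisfy f̂_1(ξ) + e^{πiη} f̂_2(ξ) + ⋯ + e^{(n−1)πiη} f̂_n(ξ) = 0 for all (ξ, η) ∈ Λ. If ξ_0 ∈ Π^1(Λ) \ Π^{1*}(Λ), then f̂_j(ξ_0) = 0 for every j = 1, …, n. -/

import Mathlib

open MeasureTheory Complex

/-- Fourier transform with the convention `f̂(ξ) = ∫ e^{πixξ} f(x) dx`. -/
noncomputable def FT (f : ℝ → ℂ) (ξ : ℝ) : ℂ :=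
  ∫ x : ℝ, Complex.exp (Real.pi * Complex.I * x * ξ) * f x

/-- `e^{πiη}`. -/
noncomputable def cexpEta (η : ℝ) : ℂ := Complex.exp (Real.pi * Complex.I * η)

/-- `Λ` is 2-periodic with respect to the second variable. -/
def Periodic2 (Λ : Set (ℝ × ℝ)) : Prop :=
  ∀ ξ η : ℝ, (ξ, η) ∈ Λ ↔ (ξ, η + 2) ∈ Λ

/-- The projection `Π(Λ)` of `Λ` on the x-axis. -/
def proj (Λ : Set (ℝ × ℝ)) : Set ℝ := {ξ | ∃ η : ℝ, (ξ, η) ∈ Λ}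

/-- `Img(ξ) = {η ∈ [0,2) : (ξ,η) ∈ Λ}`. -/
def Img (Λ : Set (ℝ × ℝ)) (ξ : ℝ) : Set ℝ := {η | η ∈ Set.Ico (0 : ℝ) 2 ∧ (ξ, η) ∈ Λ}

/-- `Π^k(Λ)` for `k < n`: points of `Π(Λ)` whose `Img` has exactly `k` elements. -/
def projExact (Λ : Set (ℝ × ℝ)) (k : ℕ) : Set ℝ :=
  {ξ | ξ ∈ proj Λ ∧ (Img Λ ξ).encard = k}

/-- `Π^n(Λ)`: points of `Π(Λ)` whose `Img` has at least `n` elements. -/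
def projAtLeast (Λ : Set (ℝ × ℝ)) (n : ℕ) : Set ℝ :=
  {ξ | ξ ∈ proj Λ ∧ (n : ℕ∞) ≤ (Img Λ ξ).encard}

/-- `ψ ∈ P^{E,ξ}_l` : there are an open interval `I ∋ ξ` and `φ_1,…,φ_{l-1} ∈ L¹(ℝ)` with
`φ̂_1 + φ̂_2 ψ + ⋯ + φ̂_{l-1} ψ^{l-2} + ψ^{l-1} = 0` on `I ∩ E`. -/
def Pmem (E : Set ℝ) (ξ : ℝ) (l : ℕ) (ψ : ℝ → ℂ) : Prop :=
  ∃ a b : ℝ, ξ ∈ Set.Ioo a b ∧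
    ∃ φ : Fin (l - 1) → ℝ → ℂ, (∀ i, Integrable (φ i)) ∧
      ∀ x ∈ Set.Ioo a b ∩ E,
        (∑ i : Fin (l - 1), FT (φ i) x * ψ x ^ (i : ℕ)) + ψ x ^ (l - 1) = 0

/-- `Π^{1*}(Λ)`: those `ξ ∈ Π^1(Λ)` such that `χ ∈ P^{Π^1(Λ),ξ}_n`, where
`χ(ξ') = e^{πiη}` with `η` the unique element of `Img(ξ')`. -/
def projOneStar (Λ : Set (ℝ × ℝ)) (n : ℕ) : Set ℝ :=
  {ξ | ξ ∈ projExact Λ 1 ∧ ∃ χ : ℝ → ℂ,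
    (∀ ξ' ∈ projExact Λ 1, ∀ η ∈ Img Λ ξ', χ ξ' = cexpEta η) ∧
    Pmem (projExact Λ 1) ξ n χ}

/-- `Π^{k*}_{su}(Λ)`. -/
def projStarSu (Λ : Set (ℝ × ℝ)) (n k : ℕ) : Set ℝ :=
  {ξ | ξ ∈ projExact Λ k ∧ ∃ a b : ℝ, ξ ∈ Set.Ioo a b ∧
    ∃ φ : Fin (n - 1) → ℝ → ℂ, (∀ i, Integrable (φ i)) ∧
      ∀ ξ' ∈ Set.Ioo a b ∩ projExact Λ k, ∀ η ∈ Img Λ ξ',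
        (∑ i : Fin (n - 1), FT (φ i) ξ' * cexpEta η ^ (i : ℕ)) = -(cexpEta η ^ (n - 1))}

/-- `Π^{k*}_{ne}(Λ)` for `k ≥ 2`. -/
def projStarNe (Λ : Set (ℝ × ℝ)) (k : ℕ) : Set ℝ :=
  {ξ | ξ ∈ projExact Λ k ∧ ∃ a b : ℝ, ξ ∈ Set.Ioo a b ∧
    ∃ φ : Fin k → ℝ → ℂ, (∀ i, Integrable (φ i)) ∧
      ∀ ξ' ∈ Set.Ioo a b ∩ projExact Λ k, ∀ η ∈ Img Λ ξ',
        (∑ i : Fin k, FT (φ i) ξ' * cexpEta η ^ (i : ℕ)) = -(cexpEta η ^ k)}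

/-- `(Γ, Λ)` with `Γ = ℝ × {0,…,n-1}` is a Heisenberg uniqueness pair: every admissible
measure `μ = Σ_m (x ↦ (x,m))_*(f_m dx)` (with each `f_m ∈ L¹(ℝ)`) whose Fourier transform
`μ̂(ξ,η) = Σ_m e^{mπiη} f̂_m(ξ)` vanishes on `Λ` must be zero, i.e. each `f_m = 0` a.e. -/
def IsHUP (n : ℕ) (Λ : Set (ℝ × ℝ)) : Prop :=
  ∀ f : Fin n → ℝ → ℂ, (∀ m, Integrable (f m)) →
    (∀ ξ η : ℝ, (ξ, η) ∈ Λ → ∑ m : Fin n, cexpEta η ^ (m : ℕ) * FT (f m) ξ = 0) →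
    ∀ m, f m =ᵐ[volume] (0 : ℝ → ℂ)

open Filter Topology Convolution FourierTransform

theorem FT_eq_fourier (f : ℝ → ℂ) (ξ : ℝ) : FT f ξ = 𝓕 f (-ξ / 2) := by
  rw [Real.fourier_real_eq_integral_exp_smul, FT]
  congr 1; ext x
  rw [smul_eq_mul]
  congr 2
  push_cast
  ring

theorem norm_ee (x ξ : ℝ) : ‖Complex.exp (Real.pi * Complex.I * x * ξ)‖ = 1 := by
  have := Complex.norm_exp_ofReal_mul_I (Real.pi * x * ξ)
  rw [← this]; congr 2; push_cast; ring

theorem integrable_ee {f : ℝ → ℂ} (hf : Integrable f) (ξ : ℝ) :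
    Integrable (fun x : ℝ => Complex.exp (Real.pi * Complex.I * x * ξ) * f x) := by
  refine hf.bdd_mul (c := 1) (Continuous.aestronglyMeasurable (by fun_prop)) ?_
  exact Filter.Eventually.of_forall fun x => (norm_ee x ξ).le

/-- L1 norm -/
noncomputable def n1 (f : ℝ → ℂ) : ℝ := ∫ x, ‖f x‖

theorem n1_nonneg (f : ℝ → ℂ) : 0 ≤ n1 f := integral_nonneg fun _ => norm_nonneg _

theorem norm_FT_le (f : ℝ → ℂ) (ξ : ℝ) : ‖FT f ξ‖ ≤ n1 f := by
  refine (norm_integral_le_integral_norm _).trans_eq ?_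
  simp only [norm_mul, norm_ee, one_mul, n1]

theorem FT_add {f g : ℝ → ℂ} (hf : Integrable f) (hg : Integrable g) (ξ : ℝ) :
    FT (fun x => f x + g x) ξ = FT f ξ + FT g ξ := by
  simp only [FT, mul_add]
  exact integral_add (integrable_ee hf ξ) (integrable_ee hg ξ)

theorem FT_smul (c : ℂ) (f : ℝ → ℂ) (ξ : ℝ) :
    FT (fun x => c * f x) ξ = c * FT f ξ := by
  simp only [FT]
  rw [← integral_const_mul]
  congr 1; ext x; ring

theorem FT_zero (ξ : ℝ) : FT (fun _ => 0) ξ = 0 := by simp [FT]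

theorem FT_sum {ι : Type*} (s : Finset ι) {f : ι → ℝ → ℂ} (hf : ∀ i ∈ s, Integrable (f i)) (ξ : ℝ) :
    FT (fun x => ∑ i ∈ s, f i x) ξ = ∑ i ∈ s, FT (f i) ξ := by
  simp only [FT, Finset.mul_sum]
  exact integral_finsetSum _ fun i hi => integrable_ee (hf i hi) ξ

theorem n1_sum_le {ι : Type*} (s : Finset ι) {f : ι → ℝ → ℂ} (hf : ∀ i ∈ s, Integrable (f i)) :
    n1 (fun x => ∑ i ∈ s, f i x) ≤ ∑ i ∈ s, n1 (f i) := by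
  simp only [n1]
  rw [← integral_finsetSum _ fun i hi => (hf i hi).norm]
  exact integral_mono (integrable_finsetSum _ hf).norm
    (integrable_finsetSum _ fun i hi => (hf i hi).norm) fun x => norm_sum_le _ _

/-- convolution -/
noncomputable def cv (f g : ℝ → ℂ) : ℝ → ℂ := f ⋆[ContinuousLinearMap.mul ℂ ℂ, volume] g

theorem cv_apply (f g : ℝ → ℂ) (x : ℝ) : cv f g x = ∫ t, f t * g (x - t) := by
  simp [cv, convolution_def]

theorem cv_integrable {f g : ℝ → ℂ} (hf : Integrable f) (hg : Integrable g) :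
    Integrable (cv f g) := hf.integrable_convolution _ hg

theorem FT_cv {f g : ℝ → ℂ} (hf : Integrable f) (hg : Integrable g) (ξ : ℝ) :
    FT (cv f g) ξ = FT f ξ * FT g ξ := by
  simp only [FT_eq_fourier, cv]
  exact Real.fourier_mul_convolution_eq hf hg _

theorem n1_cv_le {f g : ℝ → ℂ} (hf : Integrable f) (hg : Integrable g) :
    n1 (cv f g) ≤ n1 f * n1 g := by
  have h := integral_convolution (μ := volume) (ν := volume) (ContinuousLinearMap.mul ℝ ℝ) hf.norm hg.norm
  simp only [ContinuousLinearMap.mul_apply'] at h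
  simp only [n1]
  rw [← h]
  refine integral_mono (cv_integrable hf hg).norm
    (hf.norm.integrable_convolution _ hg.norm) fun x => ?_
  simp only [cv_apply, convolution_def, ContinuousLinearMap.mul_apply']
  refine (norm_integral_le_integral_norm _).trans_eq ?_
  simp only [norm_mul]

theorem exists_tau : ∃ T : ℝ → ℂ, Integrable T ∧ ∀ᶠ ξ in 𝓝 (0:ℝ), FT T ξ = 1 := by
  let b : ContDiffBump (0:ℝ) := ⟨1, 2, by norm_num, by norm_num⟩
  have hb1 : HasCompactSupport (fun x => (b x : ℂ)) :=
    b.hasCompactSupport.comp_left (g := fun x : ℝ => (x : ℂ)) (by simp)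
  have hb2 : ContDiff ℝ (⊤ : ℕ∞) (fun x => (b x : ℂ)) :=
    Complex.ofRealCLM.contDiff.comp b.contDiff
  let S : SchwartzMap ℝ ℂ := hb1.toSchwartzMap hb2
  refine ⟨(𝓕⁻ S : SchwartzMap ℝ ℂ), SchwartzMap.integrable _, ?_⟩
  have h1 : ∀ ξ : ℝ, FT ((𝓕⁻ S : SchwartzMap ℝ ℂ)) ξ = b (-ξ/2) := by
    intro ξ
    rw [FT_eq_fourier, ← SchwartzMap.fourier_coe, FourierTransform.fourier_fourierInv_eq]
    rfl
  have h2 : ∀ᶠ ξ in 𝓝 (0:ℝ), -ξ/2 ∈ Metric.closedBall (0:ℝ) b.rIn := by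
    have : Tendsto (fun ξ : ℝ => -ξ/2) (𝓝 0) (𝓝 0) := by
      have : Continuous (fun ξ : ℝ => -ξ/2) := by fun_prop
      simpa using this.tendsto 0
    exact this (Metric.closedBall_mem_nhds _ b.rIn_pos)
  filter_upwards [h2] with ξ hξ
  rw [h1, b.one_of_mem_closedBall hξ]; simp

theorem tendsto_translate {T : ℝ → ℂ} (hT : Integrable T) :
    Tendsto (fun s : ℝ => ∫ x, ‖T (x - s) - T x‖) (𝓝 0) (𝓝 0) := by
  have hm := memLp_one_iff_integrable.2 hT
  have : Fact ((1:ENNReal) ≠ ⊤) := ⟨by simp⟩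
  have hc : Continuous (fun s : ℝ => DomAddAct.mk (-s) +ᵥ hm.toLp T) :=
    Continuous.vadd (DomAddAct.continuous_mk.comp continuous_neg) continuous_const
  have h0 := (hc.sub (continuous_const (y := hm.toLp T))).norm.tendsto 0
  have key : ∀ s : ℝ, ‖(DomAddAct.mk (-s) +ᵥ hm.toLp T) - hm.toLp T‖ = ∫ x, ‖T (x - s) - T x‖ := by
    intro s
    rw [DomAddAct.mk_vadd_toLp, ← MemLp.toLp_sub, L1.norm_eq_integral_norm]
    refine integral_congr_ae ?_
    filter_upwards [MemLp.coeFn_toLp ((hm.comp_measurePreserving (measurePreserving_vadd (-s) volume)).sub hm)] with x hx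
    simp only [Pi.sub_apply] at hx ⊢
    erw [hx]
    simp [sub_eq_neg_add]
  have h1 := h0.congr key
  have h2 := key 0
  simp only [sub_zero, sub_self, norm_zero, integral_zero] at h2
  have h3 : ‖(DomAddAct.mk (-(0:ℝ)) +ᵥ hm.toLp T) - hm.toLp T‖ = 0 := h2
  have h4 : Tendsto (fun s : ℝ => ∫ x, ‖T (x - s) - T x‖) (𝓝 0)
      (𝓝 ‖(DomAddAct.mk (-(0:ℝ)) +ᵥ hm.toLp T) - hm.toLp T‖) := h1
  rwa [h3] at h4

theorem n1_scale (T : ℝ → ℂ) {l : ℝ} (hl : 0 < l) : n1 (fun x => l * T (l * x)) = n1 T := by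
  simp only [n1, norm_mul, Complex.norm_real]
  rw [integral_const_mul, Measure.integral_comp_mul_left (fun x => ‖T x‖)]
  simp [abs_of_pos hl, hl.ne']

theorem FT_scale (T : ℝ → ℂ) {l : ℝ} (hl : 0 < l) (ξ : ℝ) :
    FT (fun x => l * T (l * x)) ξ = FT T (ξ / l) := by
  have h := Measure.integral_comp_mul_left
    (fun x : ℝ => Complex.exp (Real.pi * Complex.I * x * (ξ / l : ℝ)) * T x) l
  simp only [FT]
  rw [abs_of_pos (inv_pos.2 hl)] at h
  have h2 : ∀ x : ℝ, Complex.exp (Real.pi * Complex.I * x * ξ) * (l * T (l * x)) =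
      l * (Complex.exp (Real.pi * Complex.I * (l * x : ℝ) * (ξ / l : ℝ)) * T (l * x)) := by
    intro x
    have : (Real.pi * Complex.I * (l * x : ℝ) * (ξ / l : ℝ) : ℂ) = Real.pi * Complex.I * x * ξ := by
      have : (l : ℂ) ≠ 0 := by exact_mod_cast hl.ne'
      push_cast; field_simp
    rw [this]; ring
  simp only [h2]
  rw [integral_const_mul, h, Complex.real_smul, ← mul_assoc]
  have : (l : ℂ) ≠ 0 := by exact_mod_cast hl.ne'
  simp [this]

theorem translate_scale (T : ℝ → ℂ) {l : ℝ} (hl : 0 < l) (y : ℝ) :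
    ∫ x, ‖(l * T (l * (x - y)) - l * T (l * x) : ℂ)‖ = ∫ x, ‖T (x - l * y) - T x‖ := by
  have h := n1_scale (fun x => T (x - l * y) - T x) hl
  simp only [n1] at h
  rw [← h]
  congr 1; ext x
  rw [mul_sub, mul_sub]

theorem n1_cv_sub_le {f g : ℝ → ℂ} (hf : Integrable f) (hg : Integrable g) :
    n1 (cv f g) ≤ (∫ y, ‖f y‖ * ∫ x, ‖g (x - y) - g x‖) + ‖FT f 0‖ * n1 g ∧
    AEStronglyMeasurable (fun y => ‖f y‖ * ∫ x, ‖g (x - y) - g x‖) := by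
  have hI1 : Integrable (fun p : ℝ × ℝ => f p.2 * g (p.1 - p.2)) (volume.prod volume) :=
    hf.convolution_integrand (ContinuousLinearMap.mul ℂ ℂ) hg
  have hI2 : Integrable (fun p : ℝ × ℝ => f p.2 * g p.1) (volume.prod volume) := by
    simpa [mul_comm] using hg.mul_prod hf
  have hI : Integrable (fun p : ℝ × ℝ => ‖f p.2 * g (p.1 - p.2) - f p.2 * g p.1‖)
    (volume.prod volume) := (hI1.sub hI2).norm
  have hFT : FT f 0 = ∫ y, f y := by simp [FT]
  have hsw : ∀ y, ‖f y‖ * ∫ x, ‖g (x - y) - g x‖ = ∫ x, ‖f y * g (x - y) - f y * g x‖ := by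
    intro y
    rw [← integral_const_mul]; congr 1; ext x; rw [← mul_sub, norm_mul]
  constructor
  · simp only [hsw]
    rw [← integral_integral_swap (f := fun x y => ‖f y * g (x - y) - f y * g x‖) hI]
    simp only [n1]
    rw [← integral_const_mul, ← integral_add hI.integral_prod_left (hg.norm.const_mul _)]
    refine integral_mono_ae (cv_integrable hf hg).norm
      (hI.integral_prod_left.add (hg.norm.const_mul _)) ?_
    filter_upwards [hI1.prod_right_ae] with x hx
    have h2 : Integrable (fun y => f y * g x) := hf.mul_const _
    have e : cv f g x = (∫ y, (f y * g (x - y) - f y * g x)) + FT f 0 * g x := by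
      rw [integral_sub hx h2, integral_mul_const, cv_apply, hFT]; ring
    rw [e]
    refine (norm_add_le _ _).trans ?_
    rw [norm_mul]
    exact add_le_add (norm_integral_le_integral_norm _) le_rfl
  · simp only [hsw]
    exact hI.integral_prod_right.aestronglyMeasurable

theorem loc0 {T : ℝ → ℂ} (hT : Integrable T) (h1 : ∀ᶠ ξ in 𝓝 (0:ℝ), FT T ξ = 1)
    {f : ℝ → ℂ} (hf : Integrable f) {δ : ℝ} (hδ : 0 < δ) :
    ∃ g, Integrable g ∧ n1 g ≤ δ + ‖FT f 0‖ * n1 T ∧ ∀ᶠ ξ in 𝓝 (0:ℝ), FT g ξ = FT f ξ := by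
  have hTl : ∀ l : ℝ, 0 < l → Integrable (fun x => (l * T (l * x) : ℂ)) := fun l hl =>
    (hT.comp_mul_left' hl.ne').const_mul _
  have lim : Tendsto (fun l : ℝ => ∫ y, ‖f y‖ * ∫ x, ‖T (x - l * y) - T x‖) (𝓝[>] 0) (𝓝 (∫ _ : ℝ, (0:ℝ))) := by
    refine tendsto_integral_filter_of_dominated_convergence (fun y => ‖f y‖ * (n1 T + n1 T)) ?_ ?_
      (hf.norm.mul_const _) ?_
    · filter_upwards [self_mem_nhdsWithin] with l hl
      have := (n1_cv_sub_le hf (hTl l hl)).2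
      simpa only [translate_scale T hl] using this
    · filter_upwards with l
      filter_upwards with y
      rw [norm_mul, norm_norm, Real.norm_of_nonneg (integral_nonneg fun _ => norm_nonneg _)]
      gcongr
      have i1 : Integrable (fun x => T (x - l * y)) := hT.comp_sub_right _
      have : n1 T = ∫ x, ‖T (x - l * y)‖ := (integral_sub_right_eq_self (fun x => ‖T x‖) _).symm
      nth_rewrite 1 [this]
      rw [n1, ← integral_add i1.norm hT.norm]
      exact integral_mono (i1.sub hT).norm (i1.norm.add hT.norm) fun x => norm_sub_le _ _
    · filter_upwards with y
      have a : Tendsto (fun l : ℝ => l * y) (𝓝[>] 0) (𝓝 0) := by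
        have : Continuous (fun l : ℝ => l * y) := by fun_prop
        have := this.tendsto 0
        rw [zero_mul] at this
        exact this.mono_left nhdsWithin_le_nhds
      have := ((tendsto_translate hT).comp a).const_mul ‖f y‖
      simpa using this
  rw [integral_zero] at lim
  obtain ⟨l, hl1, hl⟩ := ((lim.eventually (gt_mem_nhds hδ)).and self_mem_nhdsWithin).exists
  have hl : 0 < l := hl
  refine ⟨cv f (fun x => (l * T (l * x) : ℂ)), cv_integrable hf (hTl l hl), ?_, ?_⟩
  · have := (n1_cv_sub_le hf (hTl l hl)).1
    simp only [translate_scale T hl, n1_scale T hl] at this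
    linarith
  · have a : Tendsto (fun ξ : ℝ => ξ / l) (𝓝 0) (𝓝 0) := by
      have : Continuous (fun ξ : ℝ => ξ / l) := by fun_prop
      simpa using this.tendsto 0
    filter_upwards [a.eventually h1] with ξ hξ
    rw [FT_cv hf (hTl l hl), FT_scale T hl, hξ, mul_one]

theorem FT_mod (f : ℝ → ℂ) (ξ₀ ξ : ℝ) :
    FT (fun x => Complex.exp (Real.pi * Complex.I * x * ξ₀) * f x) ξ = FT f (ξ + ξ₀) := by
  simp only [FT]
  congr 1; ext x
  rw [← mul_assoc, ← Complex.exp_add]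
  congr 2; push_cast; ring

theorem n1_mod (f : ℝ → ℂ) (ξ₀ : ℝ) :
    n1 (fun x => Complex.exp (Real.pi * Complex.I * x * ξ₀) * f x) = n1 f := by
  simp only [n1, norm_mul, norm_ee, one_mul]

theorem loc_rep : ∃ K : ℝ, 0 ≤ K ∧ ∀ ξ₀ : ℝ, ∀ f : ℝ → ℂ, Integrable f → ∀ δ : ℝ, 0 < δ →
    ∃ g, Integrable g ∧ n1 g ≤ δ + ‖FT f ξ₀‖ * K ∧ ∀ᶠ ξ in 𝓝 ξ₀, FT g ξ = FT f ξ := by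
  obtain ⟨T, hT, h1⟩ := exists_tau
  refine ⟨n1 T, n1_nonneg T, fun ξ₀ f hf δ hδ => ?_⟩
  obtain ⟨g, hg, hn, he⟩ := loc0 hT h1 (integrable_ee hf ξ₀) hδ
  refine ⟨_, integrable_ee hg (-ξ₀), ?_, ?_⟩
  · rw [n1_mod]; rw [FT_mod, zero_add] at hn; exact hn
  · have a : Tendsto (fun ξ : ℝ => ξ + -ξ₀) (𝓝 ξ₀) (𝓝 0) := by
      have : Continuous (fun ξ : ℝ => ξ + -ξ₀) := by fun_prop
      simpa using this.tendsto ξ₀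
    filter_upwards [a.eventually he] with ξ hξ
    rw [FT_mod, hξ, FT_mod]; simp

theorem loc_one (ξ₀ : ℝ) : ∃ g, Integrable g ∧ ∀ᶠ ξ in 𝓝 ξ₀, FT g ξ = 1 := by
  obtain ⟨T, hT, h1⟩ := exists_tau
  refine ⟨_, integrable_ee hT (-ξ₀), ?_⟩
  have a : Tendsto (fun ξ : ℝ => ξ + -ξ₀) (𝓝 ξ₀) (𝓝 0) := by
    have : Continuous (fun ξ : ℝ => ξ + -ξ₀) := by fun_prop
    simpa using this.tendsto ξ₀
  filter_upwards [a.eventually h1] with ξ hξ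
  rw [FT_mod, hξ]

theorem hasSum_shift {E : Type*} [AddCommMonoid E] [TopologicalSpace E]
    {u : ℕ → E} {U : E} (h : HasSum u U) (j : ℕ) :
    HasSum (fun i => if j ≤ i then u (i - j) else 0) U := by
  have hi : Function.Injective (fun k : ℕ => k + j) := add_left_injective j
  rw [← hi.hasSum_iff]
  · convert h using 1
    ext k; simp
  · intro x hx
    rw [if_neg]
    intro hjx
    exact hx ⟨x - j, by simp; omega⟩

/-- iterated remainders of the Weierstrass division -/
noncomputable def qs (m d : ℕ) (g : ℕ → ℝ → ℂ) : ℕ → ℕ → ℝ → ℂ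
  | 0, i => if i ∈ Finset.range (d + 1) then g i else fun _ => 0
  | N + 1, i => fun x => ∑ j ∈ Finset.range (d + 1),
      (if j ≤ i then cv (qs m d g N (m + (i - j))) (g j) else fun _ => 0) x

theorem qs_integrable {m d : ℕ} {g : ℕ → ℝ → ℂ} (hg : ∀ i, Integrable (g i)) (N : ℕ) :
    ∀ i, Integrable (qs m d g N i) := by
  induction N with
  | zero =>
    intro i; simp only [qs]; split_ifs
    · exact hg i
    · exact integrable_zero _ _ _
  | succ N ih =>
    intro i; simp only [qs]
    refine integrable_finsetSum _ fun j _ => ?_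
    split_ifs
    · exact cv_integrable (ih _) (hg j)
    · exact integrable_zero _ _ _

theorem n1_zero : n1 (fun _ => 0) = 0 := by simp [n1]

theorem qs_norm {m d : ℕ} {g : ℕ → ℝ → ℂ} (hg : ∀ i, Integrable (g i))
    (hs : ∑ j ∈ Finset.range (d + 1), n1 (g j) ≤ 1 / 2) (N : ℕ) :
    Summable (fun i => n1 (qs m d g N i)) ∧ ∑' i, n1 (qs m d g N i) ≤ (1 / 2) ^ (N + 1) := by
  induction N with
  | zero =>
    have h : HasSum (fun i => n1 (qs m d g 0 i)) (∑ j ∈ Finset.range (d + 1), n1 (qs m d g 0 j)) := by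
      refine hasSum_sum_of_ne_finset_zero fun b hb => ?_
      simp only [qs, if_neg hb, n1_zero]
    refine ⟨h.summable, ?_⟩
    rw [h.tsum_eq, zero_add, pow_one]
    refine le_trans (le_of_eq (Finset.sum_congr rfl fun i hi => ?_)) hs
    simp only [qs, if_pos hi]
  | succ N ih =>
    obtain ⟨hS, hle⟩ := ih
    set c := fun i => n1 (qs m d g N i) with hc
    have hinj : Function.Injective (fun k : ℕ => m + k) := add_right_injective m
    have hS' : Summable (fun k => c (m + k)) := hS.comp_injective hinj
    have hle' : ∑' k, c (m + k) ≤ ∑' i, c i :=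
      hS'.tsum_le_tsum_of_inj (fun k : ℕ => m + k) hinj (fun _ _ => n1_nonneg _) (fun _ => le_rfl) hS
    have hB : HasSum (fun i => ∑ j ∈ Finset.range (d + 1),
        (if j ≤ i then c (m + (i - j)) else 0) * n1 (g j))
        (∑ j ∈ Finset.range (d + 1), (∑' k, c (m + k)) * n1 (g j)) :=
      hasSum_sum fun j _ => (hasSum_shift hS'.hasSum j).mul_right _
    have hb : ∀ i, n1 (qs m d g (N + 1) i) ≤ ∑ j ∈ Finset.range (d + 1),
        (if j ≤ i then c (m + (i - j)) else 0) * n1 (g j) := by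
      intro i
      simp only [qs]
      refine (n1_sum_le _ fun j _ => ?_).trans (Finset.sum_le_sum fun j _ => ?_)
      · split_ifs
        · exact cv_integrable (qs_integrable hg N _) (hg j)
        · exact integrable_zero _ _ _
      · split_ifs
        · exact n1_cv_le (qs_integrable hg N _) (hg j)
        · simp [n1_zero]
    have hsum : Summable (fun i => n1 (qs m d g (N + 1) i)) :=
      Summable.of_nonneg_of_le (fun _ => n1_nonneg _) hb hB.summable
    refine ⟨hsum, (hsum.tsum_le_tsum hb hB.summable).trans ?_⟩
    rw [hB.tsum_eq, ← Finset.mul_sum, pow_succ]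
    exact mul_le_mul (hle'.trans hle) hs (Finset.sum_nonneg fun _ _ => n1_nonneg _) (by positivity)

theorem qs_summable {m d : ℕ} {g : ℕ → ℝ → ℂ} (hg : ∀ i, Integrable (g i))
    (hs : ∑ j ∈ Finset.range (d + 1), n1 (g j) ≤ 1 / 2) (N : ℕ) (ξ : ℝ) {v : ℂ} (hv : ‖v‖ ≤ 1) :
    Summable (fun i => FT (qs m d g N i) ξ * v ^ i) ∧
    ‖∑' i, FT (qs m d g N i) ξ * v ^ i‖ ≤ (1 / 2) ^ (N + 1) := by
  obtain ⟨hS, hle⟩ := qs_norm (m := m) hg hs N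
  have hb : ∀ i, ‖FT (qs m d g N i) ξ * v ^ i‖ ≤ n1 (qs m d g N i) := by
    intro i
    rw [norm_mul, norm_pow]
    calc _ ≤ n1 (qs m d g N i) * 1 := by
          gcongr
          · exact n1_nonneg _
          · exact norm_FT_le _ _
          · exact pow_le_one₀ (norm_nonneg _) hv
      _ = _ := mul_one _
  exact ⟨hS.of_norm_bounded hb, (tsum_of_norm_bounded hS.hasSum hb).trans hle⟩

theorem qs_step {m d : ℕ} {g : ℕ → ℝ → ℂ} (hg : ∀ i, Integrable (g i))
    (hs : ∑ j ∈ Finset.range (d + 1), n1 (g j) ≤ 1 / 2) (N : ℕ) (ξ : ℝ) {v : ℂ} (hv : ‖v‖ ≤ 1)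
    (hve : v ^ m = ∑ j ∈ Finset.range (d + 1), FT (g j) ξ * v ^ j) :
    ∑' i, FT (qs m d g N i) ξ * v ^ i =
      (∑ i ∈ Finset.range m, FT (qs m d g N i) ξ * v ^ i) +
        ∑' i, FT (qs m d g (N + 1) i) ξ * v ^ i := by
  have hS := (qs_summable (m := m) hg hs N ξ hv).1
  rw [← hS.sum_add_tsum_nat_add m]
  congr 1
  have hS' : Summable (fun k => FT (qs m d g N (m + k)) ξ * v ^ k) := by
    have hinj : Function.Injective (fun k : ℕ => m + k) := add_right_injective m
    refine ((qs_norm (m := m) hg hs N).1.comp_injective hinj).of_norm_bounded fun k => ?_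
    rw [norm_mul, norm_pow]
    calc _ ≤ n1 (qs m d g N (m + k)) * 1 := by
          gcongr
          · exact n1_nonneg _
          · exact norm_FT_le _ _
          · exact pow_le_one₀ (norm_nonneg _) hv
      _ = _ := mul_one _
  have hB : HasSum (fun i => ∑ j ∈ Finset.range (d + 1),
      (if j ≤ i then FT (qs m d g N (m + (i - j))) ξ * v ^ (i - j) else 0) * (FT (g j) ξ * v ^ j))
      (∑ j ∈ Finset.range (d + 1), (∑' k, FT (qs m d g N (m + k)) ξ * v ^ k) * (FT (g j) ξ * v ^ j)) :=
    hasSum_sum fun j _ => (hasSum_shift hS'.hasSum j).mul_right _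
  rw [← Finset.mul_sum, ← hve] at hB
  have e1 : ∑' k, FT (qs m d g N (k + m)) ξ * v ^ (k + m) =
      (∑' k, FT (qs m d g N (m + k)) ξ * v ^ k) * v ^ m := by
    rw [← tsum_mul_right]; congr 1; ext k; rw [add_comm k m, pow_add]; ring
  rw [e1, ← hB.tsum_eq]
  congr 1; ext i
  have : FT (qs m d g (N + 1) i) ξ = ∑ j ∈ Finset.range (d + 1),
      if j ≤ i then FT (qs m d g N (m + (i - j))) ξ * FT (g j) ξ else 0 := by
    simp only [qs]
    rw [FT_sum]
    · refine Finset.sum_congr rfl fun j _ => ?_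
      split_ifs
      · exact FT_cv (qs_integrable hg N _) (hg j) ξ
      · exact FT_zero ξ
    · intro j _
      split_ifs
      · exact cv_integrable (qs_integrable hg N _) (hg j)
      · exact integrable_zero _ _ _
  rw [this, Finset.sum_mul]
  refine Finset.sum_congr rfl fun j _ => ?_
  split_ifs with h
  · have : v ^ i = v ^ (i - j) * v ^ j := by rw [← pow_add]; congr 1; omega
    rw [this]; ring
  · simp

theorem integrable_tsum_n1 {F : ℕ → ℝ → ℂ} (hF : ∀ i, Integrable (F i))
    (hs : Summable (fun i => n1 (F i))) : Integrable (fun x => ∑' i, F i x) := by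
  have hfin : ∑' i, ∫⁻ a, ‖F i a‖ₑ ≠ ⊤ := by
    have : ∀ i, ∫⁻ a, ‖F i a‖ₑ = ENNReal.ofReal (n1 (F i)) := fun i =>
      (ofReal_integral_norm_eq_lintegral_enorm (hF i)).symm
    simp only [this]
    rw [← ENNReal.ofReal_tsum_of_nonneg (fun _ => n1_nonneg _) hs]
    exact ENNReal.ofReal_ne_top
  have hfin' : ∫⁻ a, ∑' i, ‖F i a‖ₑ ≠ ⊤ := by
    rwa [lintegral_tsum fun i => (hF i).1.enorm]
  have hae : ∀ᵐ a, Summable (fun i => F i a) := by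
    have := ae_lt_top' (AEMeasurable.tsum fun i => (hF i).1.enorm) hfin'
    filter_upwards [this] with a ha
    refine Summable.of_norm ?_
    have h2 := ENNReal.summable_toReal ha.ne
    simpa using h2
  refine ⟨?_, ?_⟩
  · refine aestronglyMeasurable_of_tendsto_ae atTop
      (f := fun M x => ∑ i ∈ Finset.range M, F i x) (fun M => ?_) ?_
    · exact (integrable_finsetSum _ fun i _ => hF i).1
    · filter_upwards [hae] with a ha
      exact ha.hasSum.tendsto_sum_nat
  · refine lt_of_le_of_lt (lintegral_mono fun a => ?_) hfin'.lt_top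
    exact enorm_tsum_le_tsum_enorm

theorem core {m d : ℕ} {g : ℕ → ℝ → ℂ} (hg : ∀ i, Integrable (g i))
    (hs : ∑ j ∈ Finset.range (d + 1), n1 (g j) ≤ 1 / 2) :
    ∃ s : ℕ → ℝ → ℂ, (∀ i, Integrable (s i)) ∧ ∀ (ξ : ℝ) (v : ℂ), ‖v‖ ≤ 1 →
      v ^ m = ∑ j ∈ Finset.range (d + 1), FT (g j) ξ * v ^ j →
      v ^ m = ∑ i ∈ Finset.range m, FT (s i) ξ * v ^ i := by
  have hle : ∀ N i, n1 (qs m d g N i) ≤ (1 / 2) ^ (N + 1) := fun N i =>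
    ((qs_norm (m := m) hg hs N).1.le_tsum i fun _ _ => n1_nonneg _).trans (qs_norm (m := m) hg hs N).2
  have hgeo : Summable (fun N : ℕ => ((1:ℝ) / 2) ^ (N + 1)) :=
    (summable_nat_add_iff 1).2 (summable_geometric_of_lt_one (by norm_num) (by norm_num))
  have hsm : ∀ i, Summable (fun N => n1 (qs m d g N i)) := fun i =>
    Summable.of_nonneg_of_le (fun _ => n1_nonneg _) (fun N => hle N i) hgeo
  have hI : ∀ i, Integrable (fun x => ∑' N, qs m d g N i x) := by
    intro i
    exact integrable_tsum_n1 (fun N => qs_integrable hg N i) (hsm i)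
  refine ⟨fun i x => ∑' N, qs m d g N i x, hI, fun ξ v hv hve => ?_⟩
  have hF : ∀ i, HasSum (fun N => FT (qs m d g N i) ξ) (FT (fun x => ∑' N, qs m d g N i x) ξ) := by
    intro i
    have := hasSum_integral_of_summable_integral_norm
      (F := fun N (x : ℝ) => Complex.exp (Real.pi * Complex.I * x * ξ) * qs m d g N i x)
      (fun N => integrable_ee (qs_integrable hg N i) ξ)
      (by simpa only [norm_mul, norm_ee, one_mul, n1] using hsm i)
    simpa only [tsum_mul_left, FT] using this
  have h0 : v ^ m = ∑' i, FT (qs m d g 0 i) ξ * v ^ i := by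
    rw [hve]
    symm
    rw [tsum_eq_sum (s := Finset.range (d + 1))]
    · refine Finset.sum_congr rfl fun i hi => ?_
      simp only [qs, if_pos hi]
    · intro b hb
      simp only [qs, if_neg hb, FT_zero, zero_mul]
  have hM : ∀ M : ℕ, v ^ m = (∑ N ∈ Finset.range M, ∑ i ∈ Finset.range m, FT (qs m d g N i) ξ * v ^ i)
      + ∑' i, FT (qs m d g M i) ξ * v ^ i := by
    intro M
    induction M with
    | zero => simpa using h0
    | succ M ih => rw [ih, qs_step hg hs M ξ hv hve, Finset.sum_range_succ, add_assoc]
  have l1 : Tendsto (fun M => ∑ N ∈ Finset.range M, ∑ i ∈ Finset.range m, FT (qs m d g N i) ξ * v ^ i)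
      atTop (𝓝 (∑ i ∈ Finset.range m, FT (fun x => ∑' N, qs m d g N i x) ξ * v ^ i)) :=
    (hasSum_sum fun i _ => (hF i).mul_right (v ^ i)).tendsto_sum_nat
  have l2 : Tendsto (fun M => ∑' i, FT (qs m d g M i) ξ * v ^ i) atTop (𝓝 0) :=
    squeeze_zero_norm (fun M => (qs_summable hg hs M ξ hv).2) hgeo.tendsto_atTop_zero
  have l3 := l1.add l2
  rw [add_zero] at l3
  exact tendsto_nhds_unique (tendsto_const_nhds.congr hM) l3

/-- functions that coincide near `ξ₀` with the Fourier transform of an integrable function -/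
noncomputable def locA (ξ₀ : ℝ) : Subring (ℝ → ℂ) where
  carrier := {F | ∃ g : ℝ → ℂ, Integrable g volume ∧ ∀ᶠ ξ in 𝓝 ξ₀, FT g ξ = F ξ}
  mul_mem' := by
    rintro F G ⟨f, hf, h1⟩ ⟨g, hg, h2⟩
    refine ⟨cv f g, cv_integrable hf hg, ?_⟩
    filter_upwards [h1, h2] with ξ a b
    rw [FT_cv hf hg, a, b]; rfl
  one_mem' := by
    obtain ⟨g, hg, h⟩ := loc_one ξ₀
    exact ⟨g, hg, h⟩
  add_mem' := by
    rintro F G ⟨f, hf, h1⟩ ⟨g, hg, h2⟩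
    refine ⟨_, hf.add hg, ?_⟩
    filter_upwards [h1, h2] with ξ a b
    have := FT_add hf hg ξ
    rw [a, b] at this
    exact this
  zero_mem' := ⟨fun _ => 0, integrable_zero _ _ _, by filter_upwards with ξ; exact FT_zero ξ⟩
  neg_mem' := by
    rintro F ⟨f, hf, h1⟩
    refine ⟨_, hf.const_mul (-1), ?_⟩
    filter_upwards [h1] with ξ a
    rw [FT_smul, a]; simp

/-- constants -/
noncomputable def cst (ξ₀ : ℝ) (c : ℂ) : locA ξ₀ := ⟨fun _ => c, by
  obtain ⟨g, hg, h⟩ := loc_one ξ₀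
  refine ⟨_, hg.const_mul c, ?_⟩
  filter_upwards [h] with ξ a
  rw [FT_smul, a, mul_one]⟩

/-- Fourier transforms -/
noncomputable def ofFT (ξ₀ : ℝ) {f : ℝ → ℂ} (hf : Integrable f) : locA ξ₀ :=
  ⟨FT f, f, hf, Eventually.of_forall fun _ => rfl⟩

/-- evaluation -/
noncomputable def ev (ξ₀ ξ : ℝ) : locA ξ₀ →+* ℂ :=
  (Pi.evalRingHom (fun _ => ℂ) ξ).comp (locA ξ₀).subtype

theorem ev_apply (ξ₀ ξ : ℝ) (F : locA ξ₀) : ev ξ₀ ξ F = F.1 ξ := rfl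
theorem ev_cst (ξ₀ ξ : ℝ) (c : ℂ) : ev ξ₀ ξ (cst ξ₀ c) = c := rfl
theorem ev_ofFT (ξ₀ ξ : ℝ) {f : ℝ → ℂ} (hf : Integrable f) : ev ξ₀ ξ (ofFT ξ₀ hf) = FT f ξ := rfl

instance locA_nontrivial (ξ₀ : ℝ) : Nontrivial (locA ξ₀) := (ev ξ₀ ξ₀).domain_nontrivial

open Polynomial in
theorem pmem_of_poly {ξ₀ : ℝ} {E : Set ℝ} {χ : ℝ → ℂ} {n : ℕ} (Q : (locA ξ₀)[X]) (hQ : Q.Monic)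
    (hd : Q.natDegree = n - 1)
    (h : ∀ᶠ ξ in 𝓝 ξ₀, ξ ∈ E → Q.eval₂ (ev ξ₀ ξ) (χ ξ) = 0) : Pmem E ξ₀ n χ := by
  choose φ hφ hφe using fun i => (Q.coeff i).2
  have h2 : ∀ᶠ ξ in 𝓝 ξ₀, ∀ i ∈ Finset.range (n - 1), FT (φ i) ξ = ev ξ₀ ξ (Q.coeff i) :=
    (Filter.eventually_all_finset _).2 fun i _ => hφe i
  obtain ⟨a, b, hab, hsub⟩ := mem_nhds_iff_exists_Ioo_subset.1 (h.and h2)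
  refine ⟨a, b, hab, fun i => φ i, fun i => hφ i, fun x hx => ?_⟩
  obtain ⟨e1, e2⟩ := hsub hx.1
  have e1 := e1 hx.2
  rw [eval₂_eq_sum_range, hd, Finset.sum_range_succ] at e1
  have : Q.coeff (n - 1) = 1 := by rw [← hd]; exact hQ
  rw [this, map_one, one_mul] at e1
  rw [← e1, Finset.sum_range]
  congr 1
  refine Finset.sum_congr rfl fun i _ => ?_
  rw [e2 i (Finset.mem_range.2 i.2)]

open Polynomial in
theorem main_loc {ξ₀ : ℝ} {E : Set ℝ} {χ : ℝ → ℂ} {n : ℕ} (P : (locA ξ₀)[X])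
    (hd : P.natDegree ≤ n) (hP : P.map (ev ξ₀ ξ₀) ≠ 0) (h0 : ξ₀ ∈ E)
    (hr : ∀ ξ ∈ E, P.eval₂ (ev ξ₀ ξ) (χ ξ) = 0)
    (hχ : ∀ r > 0, ∀ᶠ ξ in 𝓝 ξ₀, ξ ∈ E → ‖χ ξ - χ ξ₀‖ ≤ r) :
    ∃ Q : (locA ξ₀)[X], Q.Monic ∧ Q.natDegree = n ∧
      ∀ᶠ ξ in 𝓝 ξ₀, ξ ∈ E → Q.eval₂ (ev ξ₀ ξ) (χ ξ) = 0 := by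
  set χ₀ := χ ξ₀ with hχ₀
  set p := P.comp (X + C (cst ξ₀ χ₀)) with hp
  have hpd : p.natDegree ≤ n := by
    refine natDegree_comp_le.trans ?_
    rw [natDegree_X_add_C, mul_one]; exact hd
  have hpe : ∀ ξ ∈ E, p.eval₂ (ev ξ₀ ξ) (χ ξ - χ₀) = 0 := by
    intro ξ hξ
    rw [hp, eval₂_comp, eval₂_add, eval₂_X, eval₂_C, ev_cst, sub_add_cancel]
    exact hr ξ hξ
  set pb := p.map (ev ξ₀ ξ₀) with hpb
  have hpb0 : pb ≠ 0 := by
    have : pb = (P.map (ev ξ₀ ξ₀)).comp (X + C χ₀) := by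
      rw [hpb, hp, Polynomial.map_comp]; simp [ev_cst]
    rw [this]
    intro hh
    rw [comp_eq_zero_iff] at hh
    rcases hh with hh | hh
    · exact hP hh
    · have := congrArg natDegree hh.2
      rw [natDegree_X_add_C, natDegree_C] at this
      exact one_ne_zero this
  set m := pb.natTrailingDegree with hm
  have hc : pb.coeff m ≠ 0 := by
    have := trailingCoeff_nonzero_iff_nonzero.2 hpb0
    exact this
  have hlow : ∀ j < m, pb.coeff j = 0 := fun j hj => coeff_eq_zero_of_lt_natTrailingDegree hj
  have hmn : m ≤ n := (natTrailingDegree_le_natDegree pb).trans (natDegree_map_le.trans hpd)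
  set c := pb.coeff m with hcdef
  obtain ⟨K, hK0, hK⟩ := loc_rep
  set δ : ℝ := 1 / (2 * (n + 1)) with hδ
  have hδ0 : 0 < δ := by positivity
  obtain ⟨r, hr0, hr1, hrK⟩ : ∃ r : ℝ, 0 < r ∧ r ≤ 1 ∧
      ∀ j ∈ Finset.range (n + 1), r * ‖pb.coeff j / c‖ * K ≤ δ / 2 := by
    have : ∀ᶠ r : ℝ in 𝓝[>] 0, ∀ j ∈ Finset.range (n + 1), r * ‖pb.coeff j / c‖ * K ≤ δ / 2 := by
      refine (Filter.eventually_all_finset _).2 fun j _ => ?_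
      have ht : Tendsto (fun r : ℝ => r * ‖pb.coeff j / c‖ * K) (𝓝[>] 0) (𝓝 0) := by
        have : Continuous (fun r : ℝ => r * ‖pb.coeff j / c‖ * K) := by fun_prop
        have := this.tendsto 0
        simp only [zero_mul] at this
        exact this.mono_left nhdsWithin_le_nhds
      exact ht.eventually (ge_mem_nhds (by positivity))
    have h1 : ∀ᶠ r : ℝ in 𝓝[>] 0, r ≤ 1 :=
      nhdsWithin_le_nhds (ge_mem_nhds (by norm_num : (0:ℝ) < 1))
    obtain ⟨r, ⟨ha, hb⟩, hc⟩ := ((this.and h1).and self_mem_nhdsWithin).exists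
    exact ⟨r, hc, hb, ha⟩
  have hrc : (r : ℂ) ≠ 0 := by exact_mod_cast hr0.ne'
  let F : ℕ → locA ξ₀ := fun j => (if j = m then 1 else 0) - cst ξ₀ ((r:ℂ) ^ j / ((r:ℂ) ^ m * c)) * p.coeff j
  have evF : ∀ ξ j, ev ξ₀ ξ (F j) = (if j = m then 1 else 0) -
      ((r:ℂ) ^ j / ((r:ℂ) ^ m * c)) * ev ξ₀ ξ (p.coeff j) := by
    intro ξ j
    simp only [F, map_sub, map_mul, ev_cst]
    congr 1
    split_ifs <;> simp
  have evF0 : ∀ j, ‖ev ξ₀ ξ₀ (F j)‖ ≤ r * ‖pb.coeff j / c‖ := by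
    intro j
    rw [evF]
    have e : ev ξ₀ ξ₀ (p.coeff j) = pb.coeff j := by rw [hpb, coeff_map]
    rw [e]
    rcases lt_trichotomy j m with h | h | h
    · rw [if_neg h.ne, hlow j h]; simp
    · subst h
      rw [if_pos rfl]
      have : (1:ℂ) - r ^ m / (r ^ m * c) * pb.coeff m = 0 := by
        rw [← hcdef]; field_simp; simp
      rw [this, norm_zero]; positivity
    · rw [if_neg h.ne', zero_sub, norm_neg]
      have : (r:ℂ) ^ j / (r ^ m * c) * pb.coeff j = r ^ (j - m) * (pb.coeff j / c) := by
        have : (r:ℂ) ^ j = r ^ (j - m) * r ^ m := by rw [← pow_add]; congr 1; omega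
        rw [this]; field_simp
      rw [this, norm_mul, norm_pow, Complex.norm_real, Real.norm_of_nonneg hr0.le]
      gcongr
      exact pow_le_of_le_one hr0.le hr1 (by omega)
  choose φ hφ hφe using fun j => (F j).2
  choose g hg hgn hge using fun j => hK ξ₀ (φ j) (hφ j) (δ / 2) (by positivity)
  have hFT0 : ∀ j, FT (φ j) ξ₀ = ev ξ₀ ξ₀ (F j) := fun j => (hφe j).self_of_nhds
  have hsum : ∑ j ∈ Finset.range (n + 1), n1 (g j) ≤ 1 / 2 := by
    calc _ ≤ ∑ j ∈ Finset.range (n + 1), δ := by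
          refine Finset.sum_le_sum fun j hj => (hgn j).trans ?_
          rw [hFT0]
          have := mul_le_mul_of_nonneg_right (evF0 j) hK0
          have := hrK j hj
          linarith
      _ = 1 / 2 := by
          rw [Finset.sum_const, Finset.card_range, nsmul_eq_mul, hδ]; push_cast; field_simp
  obtain ⟨s, hs, hcore⟩ := core (m := m) hg hsum
  have hfin : ∀ᶠ ξ in 𝓝 ξ₀, ξ ∈ E → (χ ξ - χ₀) ^ m =
      ∑ i ∈ Finset.range m, (r:ℂ) ^ m / (r:ℂ) ^ i * FT (s i) ξ * (χ ξ - χ₀) ^ i := by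
    have h1 : ∀ᶠ ξ in 𝓝 ξ₀, ∀ j ∈ Finset.range (n + 1), FT (g j) ξ = ev ξ₀ ξ (F j) := by
      refine (Filter.eventually_all_finset _).2 fun j _ => ?_
      filter_upwards [hge j, hφe j] with ξ a b
      rw [a, b]; rfl
    filter_upwards [h1, hχ r hr0] with ξ a b hξ
    have hv : ‖(χ ξ - χ₀) / r‖ ≤ 1 := by
      rw [norm_div, Complex.norm_real, Real.norm_of_nonneg hr0.le, div_le_one hr0]
      exact b hξ
    have hz := hpe ξ hξ
    rw [eval₂_eq_sum_range' _ (Nat.lt_succ_of_le hpd)] at hz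
    have key := hcore ξ _ hv (by
      have : ∀ j ∈ Finset.range (n + 1), FT (g j) ξ * ((χ ξ - χ₀) / r) ^ j =
          (if j = m then ((χ ξ - χ₀) / r) ^ j else 0) -
          1 / ((r:ℂ) ^ m * c) * (ev ξ₀ ξ (p.coeff j) * (χ ξ - χ₀) ^ j) := by
        intro j hj
        rw [a j hj, evF, sub_mul]
        congr 1
        · split_ifs <;> simp
        · rw [div_pow]; field_simp
      rw [Finset.sum_congr rfl this, Finset.sum_sub_distrib, ← Finset.mul_sum, hz, mul_zero, sub_zero,
        Finset.sum_ite_eq', if_pos (Finset.mem_range.2 (Nat.lt_succ_of_le hmn))])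
    have : (χ ξ - χ₀) ^ m = r ^ m * ((χ ξ - χ₀) / r) ^ m := by rw [div_pow]; field_simp
    rw [this, key, Finset.mul_sum]
    refine Finset.sum_congr rfl fun i _ => ?_
    rw [div_pow]; ring
  let Y : (locA ξ₀)[X] := X - C (cst ξ₀ χ₀)
  let R : (locA ξ₀)[X] := ∑ i ∈ Finset.range m, C (cst ξ₀ ((r:ℂ) ^ m / (r:ℂ) ^ i) * ofFT ξ₀ (hs i)) * Y ^ i
  have hY : Y.Monic := monic_X_sub_C _
  have hYd : ∀ i : ℕ, (Y ^ i).degree = i := fun i => by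
    rw [degree_eq_natDegree (hY.pow i).ne_zero, hY.natDegree_pow, natDegree_X_sub_C, mul_one]
  have hR : R.degree < (Y ^ m).degree := by
    rw [hYd]
    refine mem_degreeLT.1 (Submodule.sum_mem _ fun i hi => ?_)
    rw [← smul_eq_C_mul]
    refine Submodule.smul_mem _ _ (mem_degreeLT.2 ?_)
    rw [hYd]
    exact_mod_cast Finset.mem_range.1 hi
  have hYR : (Y ^ m - R).Monic := (hY.pow m).sub_of_left hR
  have hYRd : (Y ^ m - R).natDegree = m := by
    refine natDegree_eq_of_degree_eq_some ?_
    rw [degree_sub_eq_left_of_degree_lt hR, hYd]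
  refine ⟨X ^ (n - m) * (Y ^ m - R), (monic_X_pow _).mul hYR, ?_, ?_⟩
  · rw [(monic_X_pow _).natDegree_mul hYR, natDegree_X_pow, hYRd]; omega
  · filter_upwards [hfin] with ξ a hξ
    have eY : Y.eval₂ (ev ξ₀ ξ) (χ ξ) = χ ξ - χ₀ := by simp [Y, eval₂_sub, ev_cst]
    have eYm : (Y ^ m).eval₂ (ev ξ₀ ξ) (χ ξ) = (χ ξ - χ₀) ^ m := by rw [eval₂_pow, eY]
    have eR : R.eval₂ (ev ξ₀ ξ) (χ ξ) =
        ∑ i ∈ Finset.range m, (r:ℂ) ^ m / (r:ℂ) ^ i * FT (s i) ξ * (χ ξ - χ₀) ^ i := by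
      simp only [R, eval₂_finset_sum]
      refine Finset.sum_congr rfl fun i _ => ?_
      rw [eval₂_mul, eval₂_pow, eY, eval₂_C, map_mul, ev_cst, ev_ofFT]
    rw [eval₂_mul, eval₂_sub, eYm, eR, a hξ, sub_self, mul_zero]

theorem img_nonempty {Λ : Set (ℝ × ℝ)} {ξ : ℝ} (hξ : ξ ∈ projExact Λ 1) : (Img Λ ξ).Nonempty := by
  have := hξ.2
  obtain ⟨η, hη⟩ := Set.encard_eq_one.1 (by simpa using this)
  rw [hη]; exact Set.singleton_nonempty η

theorem img_unique {Λ : Set (ℝ × ℝ)} {ξ : ℝ} (hξ : ξ ∈ projExact Λ 1) {a b : ℝ}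
    (ha : a ∈ Img Λ ξ) (hb : b ∈ Img Λ ξ) : a = b := by
  have := hξ.2
  obtain ⟨η, hη⟩ := Set.encard_eq_one.1 (by simpa using this)
  rw [hη] at ha hb
  rw [Set.mem_singleton_iff.1 ha, Set.mem_singleton_iff.1 hb]

theorem eps_img {Λ : Set (ℝ × ℝ)} {ξ : ℝ} (hξ : ξ ∈ projExact Λ 1) {η : ℝ} (hη : η ∈ Img Λ ξ) :
    (Classical.epsilon fun η => η ∈ Img Λ ξ) = η :=
  img_unique hξ (Classical.epsilon_spec (p := fun η => η ∈ Img Λ ξ) ⟨η, hη⟩) hη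

theorem chi_cont {Λ : Set (ℝ × ℝ)} (hclosed : IsClosed Λ) (hper : Periodic2 Λ) {ξ₀ : ℝ}
    (h1 : ξ₀ ∈ projExact Λ 1) {η₀ : ℝ} (hη₀ : η₀ ∈ Img Λ ξ₀) {r : ℝ} (hr : 0 < r) :
    ∀ᶠ ξ in 𝓝 ξ₀, ∀ η ∈ Img Λ ξ, ‖cexpEta η - cexpEta η₀‖ ≤ r := by
  have hcont : Continuous cexpEta := by unfold cexpEta; fun_prop
  let K : Set ℝ := Set.Icc 0 2 ∩ {η | r ≤ ‖cexpEta η - cexpEta η₀‖}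
  have hK : IsCompact K := isCompact_Icc.inter_right
    (isClosed_le continuous_const (by fun_prop))
  have hsub : ({ξ₀} : Set ℝ) ×ˢ K ⊆ Λᶜ := by
    rintro ⟨x, η⟩ ⟨hx, hη, hηr⟩ hmem
    have hx : x = ξ₀ := hx
    subst hx
    have : cexpEta η = cexpEta η₀ := by
      rcases lt_or_eq_of_le hη.2 with h | h
      · rw [img_unique h1 (a := η) (b := η₀) ⟨⟨hη.1, h⟩, hmem⟩ hη₀]
      · subst h
        have h0 : (x, (0:ℝ)) ∈ Λ := (hper x 0).2 (by simpa using hmem)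
        rw [← img_unique h1 (a := 0) (b := η₀) ⟨⟨le_rfl, by norm_num⟩, h0⟩ hη₀]
        simp only [cexpEta]
        have : (Real.pi * Complex.I * (2:ℝ) : ℂ) = 2 * Real.pi * Complex.I := by push_cast; ring
        rw [this, Complex.exp_two_pi_mul_I]; simp
    have hηr : r ≤ ‖cexpEta η - cexpEta η₀‖ := hηr
    rw [this, sub_self, norm_zero] at hηr
    linarith
  obtain ⟨u, v, hu, hv, h3, h4, h5⟩ :=
    generalized_tube_lemma isCompact_singleton hK hclosed.isOpen_compl hsub
  filter_upwards [hu.mem_nhds (h3 rfl)] with ξ hξ η hη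
  by_contra hlt
  exact h5 (Set.mk_mem_prod hξ (h4 ⟨⟨hη.1.1, hη.1.2.le⟩, (not_le.1 hlt).le⟩)) hη.2

theorem vanish_on_pi1 (n : ℕ) (hn : 2 ≤ n) (Λ : Set (ℝ × ℝ))
    (hclosed : IsClosed Λ) (hper : Periodic2 Λ)
    (f : Fin n → ℝ → ℂ) (hf : ∀ m, MeasureTheory.Integrable (f m))
    (heq : ∀ ξ η : ℝ, (ξ, η) ∈ Λ →
      ∑ m : Fin n, cexpEta η ^ (m : ℕ) * FT (f m) ξ = 0)
    (ξ₀ : ℝ) (hξ₀ : ξ₀ ∈ projExact Λ 1 \ projOneStar Λ n) :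
    ∀ j, FT (f j) ξ₀ = 0 := by
  by_contra hne
  push Not at hne
  obtain ⟨j, hj⟩ := hne
  obtain ⟨h1, h2⟩ := hξ₀
  apply h2
  refine ⟨h1, fun ξ => cexpEta (Classical.epsilon fun η => η ∈ Img Λ ξ), ?_, ?_⟩
  · intro ξ hξ η hη
    exact congrArg cexpEta (eps_img hξ hη)
  have hmem : ∀ ξ ∈ projExact Λ 1, (Classical.epsilon fun η => η ∈ Img Λ ξ) ∈ Img Λ ξ := by
    intro ξ hξ
    obtain ⟨η, hη⟩ := img_nonempty hξ
    exact Classical.epsilon_spec (p := fun η => η ∈ Img Λ ξ) ⟨η, hη⟩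
  obtain ⟨Q, hQ, hQd, hQe⟩ := main_loc (ξ₀ := ξ₀) (E := projExact Λ 1)
    (χ := fun ξ => cexpEta (Classical.epsilon fun η => η ∈ Img Λ ξ)) (n := n - 1)
    (∑ i : Fin n, Polynomial.C (ofFT ξ₀ (hf i)) * Polynomial.X ^ (i : ℕ))
    (by
      refine Polynomial.natDegree_sum_le_of_forall_le _ _ fun i _ => ?_
      refine (Polynomial.natDegree_C_mul_X_pow_le _ _).trans ?_
      have := i.2
      omega)
    (by
      intro h0
      have := congrArg (fun p => Polynomial.coeff p (j : ℕ)) h0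
      simp only [Polynomial.coeff_map, Polynomial.finset_sum_coeff, Polynomial.coeff_C_mul_X_pow,
        Polynomial.coeff_zero, map_sum] at this
      rw [Finset.sum_eq_single j] at this
      · rw [if_pos rfl, ev_ofFT] at this
        exact hj this
      · intro b _ hb
        rw [if_neg, map_zero]
        intro e
        exact hb (Fin.ext e.symm)
      · simp)
    h1
    (by
      intro ξ hξ
      rw [Polynomial.eval₂_finset_sum, ← heq ξ _ (hmem ξ hξ).2]
      refine Finset.sum_congr rfl fun i _ => ?_
      rw [Polynomial.eval₂_mul, Polynomial.eval₂_C, Polynomial.eval₂_X_pow, ev_ofFT, mul_comm])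
    (by
      intro r hr
      filter_upwards [chi_cont hclosed hper h1 (hmem ξ₀ h1) hr] with ξ a hξ
      exact a _ (hmem ξ hξ))
  exact pmem_of_poly Q hQ hQd hQe
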